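/- Let S be a set of positive integers and P a set of primes such that every element of S is strictly less than every element of P. Let λ and λ' be multisets with all elements in S, and let μ and μ' be multisets with all elements in P with μ ≠ μ'. Then ∏_{j∈λ} j! · ∏_{p∈μ} p! ≠ ∏_{j∈λ'} j! · ∏_{p∈μ'} p!. -/

import Mathlib

/-- The product, with multiplicity, of the factorials of the elements of a multiset. -/
def factorialProd (A : Multiset ℕ) : ℕ := (A.map Nat.factorial).prod

/-!
Suppose `factorialProd A = factorialProd B` and let `p` be the largest number whose multiplicities
in `A` and `B` differ. The factors `j!` with `j > p` cancel. If `p` were prime, then `p` would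
divide `p!` exactly once and no `j!` with `j < p`, so comparing the exponents of `p` in what is left
would give `p` the same multiplicity in `A` and `B`. With `A = λ + μ` and `B = λ' + μ'`, the largest
difference lies among the elements of `μ` and `μ'`, which are prime.
-/

open scoped Nat

theorem exists_count_ne_and_forall_gt_count_eq {α : Type*} [Preorder α] [DecidableEq α]
    {A B : Multiset α} (h : A ≠ B) :
    ∃ a, A.count a ≠ B.count a ∧ ∀ b > a, A.count b = B.count b := by
  have hne : (A.toFinsupp.neLocus B.toFinsupp).Nonempty :=
    Finsupp.nonempty_neLocus_iff.2 (Multiset.toFinsupp.injective.ne h)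
  obtain ⟨a, ha, hmax⟩ := Finset.exists_maximal hne
  simp only [Finsupp.mem_neLocus, Multiset.toFinsupp_apply] at ha hmax
  refine ⟨a, ha, fun b hab => ?_⟩
  by_contra hb
  exact hab.not_ge (hmax hb hab.le)

theorem factorization_factorial_self {p : ℕ} (hp : p.Prime) : (p !).factorization p = 1 := by
  rw [← Nat.mul_factorial_pred hp.ne_zero,
    Nat.factorization_mul hp.ne_zero (Nat.factorial_ne_zero _), Finsupp.add_apply,
    hp.factorization_self, Nat.factorization_factorial_eq_zero_of_lt (Nat.sub_one_lt hp.ne_zero)]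

theorem factorialProd_cons (j : ℕ) (A : Multiset ℕ) :
    factorialProd (j ::ₘ A) = j ! * factorialProd A := by
  simp only [factorialProd, Multiset.map_cons, Multiset.prod_cons]

theorem factorialProd_add (A B : Multiset ℕ) :
    factorialProd (A + B) = factorialProd A * factorialProd B := by
  simp only [factorialProd, Multiset.map_add, Multiset.prod_add]

theorem factorialProd_ne_zero (A : Multiset ℕ) : factorialProd A ≠ 0 := by
  simp [factorialProd, Multiset.prod_eq_zero_iff, Nat.factorial_ne_zero]

theorem factorization_factorialProd_eq_count {p : ℕ} (hp : p.Prime) {A : Multiset ℕ}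
    (hA : ∀ j ∈ A, j ≤ p) : (factorialProd A).factorization p = A.count p := by
  induction A using Multiset.induction with
  | empty => simp [factorialProd]
  | cons j A ih =>
    rw [Multiset.forall_mem_cons] at hA
    rw [factorialProd_cons,
      Nat.factorization_mul j.factorial_ne_zero (factorialProd_ne_zero A), Finsupp.add_apply,
      ih hA.2]
    rcases hA.1.lt_or_eq with hlt | rfl
    · rw [Nat.factorization_factorial_eq_zero_of_lt hlt, Multiset.count_cons_of_ne hlt.ne',
        zero_add]
    · rw [factorization_factorial_self hp, Multiset.count_cons_self, add_comm]

theorem count_eq_of_factorialProd_eq {p : ℕ} (hp : p.Prime) {A B : Multiset ℕ}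
    (h : factorialProd A = factorialProd B) (hcount : ∀ j > p, A.count j = B.count j) :
    A.count p = B.count p := by
  have hlarge : A.filter (¬ · ≤ p) = B.filter (¬ · ≤ p) := by
    ext j
    simp only [Multiset.count_filter, not_le]
    split_ifs with hj
    exacts [hcount j hj, rfl]
  have hsmall : factorialProd (A.filter (· ≤ p)) = factorialProd (B.filter (· ≤ p)) := by
    rw [← Multiset.filter_add_not (· ≤ p) A, ← Multiset.filter_add_not (· ≤ p) B,
      factorialProd_add, factorialProd_add, hlarge] at h
    exact mul_right_cancel₀ (factorialProd_ne_zero _) h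
  have hexp (C : Multiset ℕ) :
      (factorialProd (C.filter (· ≤ p))).factorization p = C.count p := by
    rw [factorization_factorialProd_eq_count hp fun j hj => (Multiset.mem_filter.1 hj).2,
      Multiset.count_filter_of_pos (p := (· ≤ p)) le_rfl]
  rw [← hexp A, ← hexp B, hsmall]

/-- Let `S` be a set of positive integers and `P` a set of primes, with every element of `S`
strictly less than every element of `P`.  If `λ, λ'` are multisets with elements in `S`, and
`μ ≠ μ'` are multisets with elements in `P`, then
`∏_{j∈λ} j! · ∏_{p∈μ} p! ≠ ∏_{j∈λ'} j! · ∏_{p∈μ'} p!`. -/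
theorem factorialProd_mul_ne (S P : Set ℕ) (hS : ∀ s ∈ S, 0 < s)
    (hP : ∀ q ∈ P, Nat.Prime q) (hSP : ∀ s ∈ S, ∀ q ∈ P, s < q)
    (lam lam' mu mu' : Multiset ℕ)
    (hlam : ∀ j ∈ lam, j ∈ S) (hlam' : ∀ j ∈ lam', j ∈ S)
    (hmu : ∀ q ∈ mu, q ∈ P) (hmu' : ∀ q ∈ mu', q ∈ P) (hne : mu ≠ mu') :
    factorialProd lam * factorialProd mu ≠ factorialProd lam' * factorialProd mu' := by
  intro h
  obtain ⟨p, hp_ne, hp_gt⟩ := exists_count_ne_and_forall_gt_count_eq hne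
  have hpP : p ∈ P := by
    by_contra hp
    exact hp_ne (by rw [Multiset.count_eq_zero_of_notMem (mt (hmu p) hp),
      Multiset.count_eq_zero_of_notMem (mt (hmu' p) hp)])
  have count_add_of_le {A : Multiset ℕ} (hA : ∀ j ∈ A, j ∈ S) (B : Multiset ℕ) {j : ℕ}
      (hj : p ≤ j) : (A + B).count j = B.count j := by
    have hjA : j ∉ A := fun hmem => (hSP j (hA j hmem) p hpP).not_ge hj
    rw [Multiset.count_add, Multiset.count_eq_zero_of_notMem hjA, zero_add]
  have hcount : (lam + mu).count p = (lam' + mu').count p := by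
    refine count_eq_of_factorialProd_eq (hP p hpP) ?_ fun j hj => ?_
    · rw [factorialProd_add, factorialProd_add, h]
    · rw [count_add_of_le hlam mu hj.le, count_add_of_le hlam' mu' hj.le, hp_gt j hj]
  rw [count_add_of_le hlam mu le_rfl, count_add_of_le hlam' mu' le_rfl] at hcount
  exact hp_ne hcount
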